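/- arXiv:1108.4859 — 2 statements merged into one kernel-verified Lean document; each statement's English description precedes it below -/
import Mathlib

section
/- Let μ > 0 and a, θ, v ∈ ℝ, write η = η(·; μ, a, θ, v), and define the symplectic pairing ω(f, g) = Im ∫_ℝ f conj(g) dx for complex-valued functions f, g on ℝ. Then the partial derivatives of η with respect to its parameters satisfy: ω(∂_θη, ∂_μη) = 1, ω(∂_vη, ∂_aη) = 1, and ω(∂_μη, ∂_aη) = ω(∂_μη, ∂_vη) = ω(∂_θη, ∂_aη) = ω(∂_θη, ∂_vη) = 0. In other words, the symplectic form of L²(ℝ, ℂ) restricted to the soliton manifold is dθ∧dμ + dv∧da. -/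
open Real MeasureTheory

/-- The soliton profile `η(x; μ, a, θ, v) = e^{iθ} e^{iμ⁻¹v(x-a)} μ sech(μ(x-a))`. -/
noncomputable def soliton (μ a θ v x : ℝ) : ℂ :=
  Complex.exp (Complex.I * (θ : ℂ)) * Complex.exp (Complex.I * (((v / μ) * (x - a) : ℝ) : ℂ)) *
    (μ : ℂ) * ((1 / Real.cosh (μ * (x - a)) : ℝ) : ℂ)

/-!
Along the soliton manifold every tangent vector is a complex multiple `z · η` of the soliton, where
`z` depends on `x` only through `u = μ (x - a)`: its real part is a combination of `1 - u tanh u`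
and `tanh u`, its imaginary part of `1` and `u`. Since `|η|² = μ² sech² u`, the symplectic form
pairs two such multipliers as `μ ∫ Im (z conj w) sech² u du`. Only the even products survive, and
these need just `∫ sech² u du = 2` and, by parts, `∫ u tanh u sech² u du = 1`.
-/

open Filter Topology
open scoped ENNReal ComplexConjugate

theorem hasDerivAt_inv_cosh (u : ℝ) :
    HasDerivAt (fun u ↦ (cosh u)⁻¹) (-tanh u * (cosh u)⁻¹) u := by
  refine ((hasDerivAt_cosh u).fun_inv (cosh_pos u).ne').congr_deriv ?_
  rw [tanh_eq_sinh_div_cosh]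
  field_simp

theorem hasDerivAt_tanh (u : ℝ) : HasDerivAt tanh (cosh u ^ 2)⁻¹ u := by
  rw [funext tanh_eq_sinh_div_cosh]
  refine ((hasDerivAt_sinh u).fun_div (hasDerivAt_cosh u) (cosh_pos u).ne').congr_deriv ?_
  rw [← one_div, ← cosh_sq_sub_sinh_sq u, sq, sq]

theorem hasDerivAt_inv_cosh_sq (u : ℝ) :
    HasDerivAt (fun u ↦ (cosh u ^ 2)⁻¹) (-2 * (tanh u * (cosh u ^ 2)⁻¹)) u := by
  simp only [← inv_pow]
  refine ((hasDerivAt_inv_cosh u).fun_pow 2).congr_deriv ?_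
  ring

theorem continuous_tanh : Continuous tanh :=
  continuous_iff_continuousAt.2 fun u ↦ (hasDerivAt_tanh u).continuousAt

theorem tanh_eq_two_mul_sigmoid_sub_one (u : ℝ) : tanh u = 2 * sigmoid (2 * u) - 1 := by
  have hu : exp (-(2 * u)) = exp (-u) / exp u := by rw [← exp_sub]; ring_nf
  rw [tanh_eq_sinh_div_cosh, sinh_eq, cosh_eq, sigmoid_def, hu]
  field_simp
  ring

theorem tendsto_tanh_atTop : Tendsto tanh atTop (𝓝 1) := by
  have h := (tendsto_sigmoid_atTop.comp (tendsto_id.const_mul_atTop two_pos)).const_mul 2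
    |>.sub_const 1
  rw [show (2 : ℝ) * 1 - 1 = 1 by norm_num] at h
  exact h.congr fun u ↦ (tanh_eq_two_mul_sigmoid_sub_one u).symm

theorem tendsto_tanh_atBot : Tendsto tanh atBot (𝓝 (-1)) := by
  simpa [Function.comp_def] using (tendsto_tanh_atTop.comp tendsto_neg_atBot_atTop).neg

theorem abs_pow_le_two_mul_factorial_mul_cosh (n : ℕ) (u : ℝ) :
    |u| ^ n ≤ 2 * n.factorial * cosh u := calc
  |u| ^ n ≤ exp |u| * n.factorial :=
    (div_le_iff₀ (by positivity)).1 (pow_div_factorial_le_exp _ (abs_nonneg u) n)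
  _ ≤ (exp u + exp (-u)) * n.factorial := by
    gcongr
    exact exp_abs_le u
  _ = 2 * n.factorial * cosh u := by rw [cosh_eq]; ring

theorem integral_eq_zero_of_odd {G E : Type*} [MeasurableSpace G] [AddGroup G] [MeasurableNeg G]
    [NormedAddCommGroup E] [NormedSpace ℝ E] {ν : Measure G} [ν.IsNegInvariant] {f : G → E}
    (hf : f.Odd) : ∫ x, f x ∂ν = 0 := by
  have h := integral_neg_eq_self f ν
  simp only [hf _, integral_neg] at h
  have : IsAddTorsionFree E := .of_isTorsionFree ℝ E
  exact self_eq_neg.1 h.symm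

/-- The measure `sech² u du` on the line: in the variable `u = μ (x - a)`, the mass distribution
`|η|² dx` of the soliton is `μ` times this measure. -/
noncomputable def sechSqMeasure : Measure ℝ :=
  volume.withDensity fun u ↦ ENNReal.ofReal (cosh u ^ 2)⁻¹

section SechSqMeasure

variable {E : Type*} [NormedAddCommGroup E] [NormedSpace ℝ E]

theorem measurable_ofReal_inv_cosh_sq :
    Measurable fun u : ℝ ↦ ENNReal.ofReal (cosh u ^ 2)⁻¹ := by
  fun_prop

theorem integral_sechSqMeasure (f : ℝ → E) :
    ∫ u, f u ∂sechSqMeasure = ∫ u, (cosh u ^ 2)⁻¹ • f u := by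
  rw [sechSqMeasure, integral_withDensity_eq_integral_toReal_smul measurable_ofReal_inv_cosh_sq
    (ae_of_all _ fun _ ↦ ENNReal.ofReal_lt_top)]
  congr!
  exact ENNReal.toReal_ofReal (by positivity)

theorem integrable_sechSqMeasure_iff {f : ℝ → E} :
    Integrable f sechSqMeasure ↔ Integrable fun u ↦ (cosh u ^ 2)⁻¹ • f u := by
  rw [sechSqMeasure, integrable_withDensity_iff_integrable_smul' measurable_ofReal_inv_cosh_sq
    (ae_of_all _ fun _ ↦ ENNReal.ofReal_lt_top)]
  congr!
  exact ENNReal.toReal_ofReal (by positivity)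

theorem integral_sechSqMeasure_of_odd {f : ℝ → E} (hf : f.Odd) : ∫ u, f u ∂sechSqMeasure = 0 := by
  rw [integral_sechSqMeasure]
  exact integral_eq_zero_of_odd fun u ↦ by rw [cosh_neg, hf u, smul_neg]

end SechSqMeasure

theorem integrable_pow_sechSqMeasure (n : ℕ) : Integrable (fun u ↦ u ^ n) sechSqMeasure := by
  rw [integrable_sechSqMeasure_iff]
  set C : ℝ := 2 * n.factorial + 2 * (n + 2).factorial
  have hcont : Continuous fun u : ℝ ↦ (cosh u ^ 2)⁻¹ • u ^ n :=
    ((continuous_cosh.pow 2).inv₀ fun u ↦ (pow_pos (cosh_pos u) 2).ne').smul (continuous_pow n)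
  refine (integrable_inv_one_add_sq.const_mul C).mono' hcont.aestronglyMeasurable
    (ae_of_all _ fun u ↦ ?_)
  have hbound : |u| ^ n * (1 + u ^ 2) ≤ C * cosh u ^ 2 := calc
    |u| ^ n * (1 + u ^ 2) = |u| ^ n + |u| ^ (n + 2) := by rw [← sq_abs u]; ring
    _ ≤ C * cosh u :=
      (add_le_add (abs_pow_le_two_mul_factorial_mul_cosh n u)
        (abs_pow_le_two_mul_factorial_mul_cosh (n + 2) u)).trans_eq (add_mul _ _ _).symm
    _ ≤ C * cosh u ^ 2 := by
      gcongr
      exact le_self_pow₀ (one_le_cosh u) two_ne_zero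
  rw [norm_smul, norm_inv, norm_pow, norm_pow, norm_eq_abs, norm_eq_abs, abs_of_pos (cosh_pos u),
    inv_mul_eq_div, ← div_eq_mul_inv, div_le_div_iff₀ (pow_pos (cosh_pos u) 2) (by positivity)]
  exact hbound

instance : IsFiniteMeasure sechSqMeasure :=
  (integrable_const_iff_isFiniteMeasure one_ne_zero).1 <| by
    simpa using integrable_pow_sechSqMeasure 0

theorem memLp_id_sechSqMeasure : MemLp id 2 sechSqMeasure :=
  (memLp_two_iff_integrable_sq measurable_id.aestronglyMeasurable).2
    (integrable_pow_sechSqMeasure 2)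

theorem memLp_tanh_sechSqMeasure (p : ℝ≥0∞) : MemLp tanh p sechSqMeasure :=
  .of_bound continuous_tanh.aestronglyMeasurable 1 (ae_of_all _ fun u ↦ (abs_tanh_lt_one u).le)

theorem memLp_mul_tanh_sechSqMeasure : MemLp (fun u ↦ u * tanh u) 2 sechSqMeasure :=
  (memLp_tanh_sechSqMeasure ∞).mul' memLp_id_sechSqMeasure

theorem integrable_inv_cosh_sq : Integrable fun u ↦ (cosh u ^ 2)⁻¹ := by
  simpa using integrable_sechSqMeasure_iff.1 (integrable_const (1 : ℝ))

theorem integral_inv_cosh_sq : ∫ u, (cosh u ^ 2)⁻¹ = 2 := by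
  rw [integral_of_hasDerivAt_of_tendsto hasDerivAt_tanh integrable_inv_cosh_sq
    tendsto_tanh_atBot tendsto_tanh_atTop]
  norm_num

theorem measureReal_univ_sechSqMeasure : sechSqMeasure.real Set.univ = 2 := by
  simpa [integral_inv_cosh_sq] using integral_sechSqMeasure fun _ ↦ (1 : ℝ)

theorem integral_mul_tanh_sechSqMeasure : ∫ u, u * tanh u ∂sechSqMeasure = 1 := by
  have hu : Integrable fun u ↦ u * (cosh u ^ 2)⁻¹ := by
    simpa [mul_comm] using
      integrable_sechSqMeasure_iff.1 (memLp_id_sechSqMeasure.integrable one_le_two)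
  have hut : Integrable fun u ↦ u * (-2 * (tanh u * (cosh u ^ 2)⁻¹)) :=
    ((integrable_sechSqMeasure_iff.1
      (memLp_mul_tanh_sechSqMeasure.integrable one_le_two)).const_mul (-2)).congr
        (ae_of_all _ fun u ↦ by simp only [smul_eq_mul]; ring)
  have hparts : ∫ u, u * (-2 * (tanh u * (cosh u ^ 2)⁻¹)) = -∫ u, 1 * (cosh u ^ 2)⁻¹ :=
    integral_mul_deriv_eq_deriv_mul_of_integrable (fun u _ ↦ hasDerivAt_id' u)
      (fun u _ ↦ hasDerivAt_inv_cosh_sq u) hut (integrable_inv_cosh_sq.const_mul 1) hu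
  calc ∫ u, u * tanh u ∂sechSqMeasure
      = ∫ u, -2⁻¹ * (u * (-2 * (tanh u * (cosh u ^ 2)⁻¹))) := by
        rw [integral_sechSqMeasure]
        congr! 2 with u
        rw [smul_eq_mul]
        ring
    _ = 1 := by
        rw [integral_const_mul, hparts]
        simp only [one_mul, integral_inv_cosh_sq]
        norm_num

/-- The logarithmic derivative of the soliton amplitude, as a function of `u = μ (x - a)`, when
`log μ` varies at rate `r` and the rescaled centre `μ a` at rate `s` (the latter with `μ` fixed). -/
noncomputable def amplitudeRate (r s u : ℝ) : ℝ := r * (1 - u * tanh u) + s * tanh u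

/-- The rate of change of the soliton phase, as a function of `u = μ (x - a)`: `α` at
the centre, with slope `κ`. -/
def phaseRate (α κ u : ℝ) : ℝ := α + κ * u

theorem memLp_amplitudeRate (r s : ℝ) : MemLp (amplitudeRate r s) 2 sechSqMeasure :=
  (((memLp_const 1).sub memLp_mul_tanh_sechSqMeasure).const_mul r).add
    ((memLp_tanh_sechSqMeasure 2).const_mul s)

theorem memLp_phaseRate (α κ : ℝ) : MemLp (phaseRate α κ) 2 sechSqMeasure :=
  (memLp_const α).add (memLp_id_sechSqMeasure.const_mul κ)

theorem integrable_phaseRate_mul_amplitudeRate (α κ r s : ℝ) :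
    Integrable (fun u ↦ phaseRate α κ u * amplitudeRate r s u) sechSqMeasure :=
  (memLp_phaseRate α κ).integrable_mul (memLp_amplitudeRate r s)

theorem integral_phaseRate_mul_amplitudeRate (α κ r s : ℝ) :
    ∫ u, phaseRate α κ u * amplitudeRate r s u ∂sechSqMeasure = α * r + κ * s := by
  have heven : Integrable (fun u ↦ α * r + (κ * s - α * r) * (u * tanh u)) sechSqMeasure :=
    (integrable_const _).add ((memLp_mul_tanh_sechSqMeasure.integrable one_le_two).const_mul _)
  have hodd : ∫ u, phaseRate α κ u * amplitudeRate r s u -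
      (α * r + (κ * s - α * r) * (u * tanh u)) ∂sechSqMeasure = 0 :=
    integral_sechSqMeasure_of_odd fun u ↦ by
      simp only [phaseRate, amplitudeRate, tanh_neg]
      ring
  rw [integral_sub (integrable_phaseRate_mul_amplitudeRate α κ r s) heven, sub_eq_zero] at hodd
  rw [hodd, integral_add (integrable_const _)
    ((memLp_mul_tanh_sechSqMeasure.integrable one_le_two).const_mul _), integral_const,
    integral_const_mul, measureReal_univ_sechSqMeasure, integral_mul_tanh_sechSqMeasure,
    smul_eq_mul]
  ring

theorem soliton_eq_cexp_mul (μ a θ v x : ℝ) :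
    soliton μ a θ v x =
      Complex.exp (Complex.I * (θ + v / μ * (x - a) : ℝ)) * (μ * (cosh (μ * (x - a)))⁻¹ : ℝ) := by
  rw [soliton, ← Complex.exp_add]
  push_cast
  ring_nf

theorem soliton_mul_conj (μ a θ v x : ℝ) :
    soliton μ a θ v x * conj (soliton μ a θ v x) = (μ ^ 2 * (cosh (μ * (x - a)) ^ 2)⁻¹ : ℝ) := by
  rw [Complex.mul_conj', soliton_eq_cexp_mul, norm_mul, mul_comm Complex.I,
    Complex.norm_exp_ofReal_mul_I, one_mul, Complex.norm_real, norm_eq_abs, ← Complex.ofReal_pow,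
    sq_abs, mul_pow, inv_pow]

theorem integral_mul_soliton_mul_conj (μ a θ v : ℝ) (z w : ℝ → ℂ) :
    ∫ x, z (μ * (x - a)) * soliton μ a θ v x * conj (w (μ * (x - a)) * soliton μ a θ v x) =
      |μ| * ∫ u, z u * conj (w u) ∂sechSqMeasure := by
  set g : ℝ → ℂ := fun u ↦ (cosh u ^ 2)⁻¹ • (z u * conj (w u))
  calc ∫ x, z (μ * (x - a)) * soliton μ a θ v x * conj (w (μ * (x - a)) * soliton μ a θ v x)
      = ∫ x, μ ^ 2 • g (μ * (x - a)) := by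
        congr! 2 with x
        rw [map_mul, mul_mul_mul_comm, soliton_mul_conj]
        simp only [g, Complex.real_smul, Complex.ofReal_mul]
        ring
    _ = (μ ^ 2 * |μ⁻¹|) • ∫ u, g u := by
        rw [integral_smul, integral_sub_right_eq_self (fun x ↦ g (μ * x)) a,
          Measure.integral_comp_mul_left, mul_smul]
    _ = |μ| * ∫ u, z u * conj (w u) ∂sechSqMeasure := by
        have hscale : μ ^ 2 * |μ⁻¹| = |μ| := by
          rw [abs_inv, ← sq_abs, ← div_eq_mul_inv, sq, mul_self_div_self]
        rw [hscale, integral_sechSqMeasure, Complex.real_smul]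

theorem im_integral_mul_soliton_mul_conj (μ a θ v : ℝ) {z w : ℝ → ℂ}
    (hz : MemLp z 2 sechSqMeasure) (hw : MemLp w 2 sechSqMeasure) :
    (∫ x, z (μ * (x - a)) * soliton μ a θ v x *
        conj (w (μ * (x - a)) * soliton μ a θ v x)).im =
      |μ| * ∫ u, (z u * conj (w u)).im ∂sechSqMeasure := by
  have hzw : Integrable (fun u ↦ z u * conj (w u)) sechSqMeasure := hz.integrable_mul hw.star
  rw [integral_mul_soliton_mul_conj, Complex.im_ofReal_mul]
  exact congrArg _ (integral_im hzw).symm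

/-- The factor by which the soliton is multiplied, at `u = μ (x - a)`, when its parameters
`(μ, a, θ, v)` move with velocity `(dμ, da, dθ, dv)`; it does not depend on `a` and `θ`. -/
noncomputable def solitonRate (μ v dμ da dθ dv u : ℝ) : ℂ :=
  amplitudeRate (dμ / μ) (μ * da) u +
    phaseRate (dθ - v / μ * da) (dv / μ ^ 2 - v / μ ^ 3 * dμ) u * Complex.I

/-- The tangent vector to the soliton manifold at `soliton μ a θ v` with coordinates
`(dμ, da, dθ, dv)`. -/
noncomputable def solitonTangent (μ a θ v dμ da dθ dv x : ℝ) : ℂ :=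
  solitonRate μ v dμ da dθ dv (μ * (x - a)) * soliton μ a θ v x

theorem memLp_solitonRate (μ v dμ da dθ dv : ℝ) :
    MemLp (solitonRate μ v dμ da dθ dv) 2 sechSqMeasure :=
  memLp_re_im_iff.1
    ⟨by simpa [solitonRate] using memLp_amplitudeRate (dμ / μ) (μ * da),
      by simpa [solitonRate] using
        memLp_phaseRate (dθ - v / μ * da) (dv / μ ^ 2 - v / μ ^ 3 * dμ)⟩

theorem hasDerivAt_cexp_I_mul_mul {φ A : ℝ → ℝ} {φ' r t : ℝ} (hφ : HasDerivAt φ φ' t)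
    (hA : HasDerivAt A (r * A t) t) :
    HasDerivAt (fun s ↦ Complex.exp (Complex.I * φ s) * A s)
      ((r + φ' * Complex.I) * (Complex.exp (Complex.I * φ t) * A t)) t := by
  refine ((hφ.ofReal_comp.const_mul Complex.I).cexp.fun_mul hA.ofReal_comp).congr_deriv ?_
  push_cast
  ring

theorem hasDerivAt_soliton_comp {m b p w : ℝ → ℝ} {m' b' p' w' t : ℝ} (x : ℝ) (hmt : m t ≠ 0)
    (hm : HasDerivAt m m' t) (hb : HasDerivAt b b' t) (hp : HasDerivAt p p' t)
    (hw : HasDerivAt w w' t) :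
    HasDerivAt (fun s ↦ soliton (m s) (b s) (p s) (w s) x)
      (solitonTangent (m t) (b t) (p t) (w t) m' b' p' w' x) t := by
  have hu := hm.fun_mul (hb.const_sub x)
  have hphase : HasDerivAt (fun s ↦ p s + w s / m s * (x - b s))
      (phaseRate (p' - w t / m t * b') (w' / m t ^ 2 - w t / m t ^ 3 * m')
        (m t * (x - b t))) t := by
    refine (hp.fun_add ((hw.fun_div hm hmt).fun_mul (hb.const_sub x))).congr_deriv ?_
    rw [phaseRate]
    field_simp
    ring
  have hamplitude : HasDerivAt (fun s ↦ m s * (cosh (m s * (x - b s)))⁻¹)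
      (amplitudeRate (m' / m t) (m t * b') (m t * (x - b t)) *
        (m t * (cosh (m t * (x - b t)))⁻¹)) t := by
    refine (hm.fun_mul ((hasDerivAt_inv_cosh _).comp t hu)).congr_deriv ?_
    simp only [amplitudeRate, Function.comp_apply]
    field_simp
    ring
  simp only [solitonTangent, soliton_eq_cexp_mul]
  exact hasDerivAt_cexp_I_mul_mul hphase hamplitude

theorem im_integral_solitonTangent_mul_conj {μ : ℝ} (hμ : 0 < μ)
    (a θ v dμ₁ da₁ dθ₁ dv₁ dμ₂ da₂ dθ₂ dv₂ : ℝ) :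
    (∫ x, solitonTangent μ a θ v dμ₁ da₁ dθ₁ dv₁ x *
        conj (solitonTangent μ a θ v dμ₂ da₂ dθ₂ dv₂ x)).im =
      (dθ₁ * dμ₂ - dμ₁ * dθ₂) + (dv₁ * da₂ - da₁ * dv₂) := by
  have him (P₁ Q₁ P₂ Q₂ : ℝ) :
      ((P₁ + Q₁ * Complex.I) * conj (P₂ + Q₂ * Complex.I : ℂ)).im = Q₁ * P₂ - Q₂ * P₁ := by
    simp only [map_add, map_mul, Complex.conj_ofReal, Complex.conj_I, Complex.mul_im,
      Complex.add_re, Complex.add_im, Complex.ofReal_re, Complex.ofReal_im, Complex.mul_re,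
      Complex.neg_re, Complex.neg_im, Complex.I_re, Complex.I_im]
    ring
  simp only [solitonTangent]
  rw [im_integral_mul_soliton_mul_conj μ a θ v (memLp_solitonRate ..) (memLp_solitonRate ..)]
  simp only [solitonRate, him]
  rw [integral_sub (integrable_phaseRate_mul_amplitudeRate ..)
    (integrable_phaseRate_mul_amplitudeRate ..), integral_phaseRate_mul_amplitudeRate,
    integral_phaseRate_mul_amplitudeRate, abs_of_pos hμ]
  field_simp
  ring

/-- The restriction of the symplectic form `ω(f,g) = Im ∫ f conj(g)` of `L²(ℝ,ℂ)` to the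
soliton manifold is `dθ∧dμ + dv∧da`: the parameter-derivatives of `η` satisfy
`ω(∂_θη, ∂_μη) = 1`, `ω(∂_vη, ∂_aη) = 1` and the other pairings vanish. -/
theorem soliton_symplectic_form (μ a θ v : ℝ) (hμ : 0 < μ) :
    let ημ : ℝ → ℂ := fun x => deriv (fun m : ℝ => soliton m a θ v x) μ
    let ηa : ℝ → ℂ := fun x => deriv (fun b : ℝ => soliton μ b θ v x) a
    let ηθ : ℝ → ℂ := fun x => deriv (fun p : ℝ => soliton μ a p v x) θ
    let ηv : ℝ → ℂ := fun x => deriv (fun w : ℝ => soliton μ a θ w x) v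
    let ω : (ℝ → ℂ) → (ℝ → ℂ) → ℝ := fun f g => (∫ x : ℝ, f x * (starRingEnd ℂ) (g x)).im
    ω ηθ ημ = 1 ∧ ω ηv ηa = 1 ∧
      ω ημ ηa = 0 ∧ ω ημ ηv = 0 ∧ ω ηθ ηa = 0 ∧ ω ηθ ηv = 0 := by
  intro ημ ηa ηθ ηv ω
  have hημ : ημ = solitonTangent μ a θ v 1 0 0 0 := funext fun x ↦
    (hasDerivAt_soliton_comp x hμ.ne' (hasDerivAt_id μ) (hasDerivAt_const μ a)
      (hasDerivAt_const μ θ) (hasDerivAt_const μ v)).deriv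
  have hηa : ηa = solitonTangent μ a θ v 0 1 0 0 := funext fun x ↦
    (hasDerivAt_soliton_comp x hμ.ne' (hasDerivAt_const a μ) (hasDerivAt_id a)
      (hasDerivAt_const a θ) (hasDerivAt_const a v)).deriv
  have hηθ : ηθ = solitonTangent μ a θ v 0 0 1 0 := funext fun x ↦
    (hasDerivAt_soliton_comp x hμ.ne' (hasDerivAt_const θ μ) (hasDerivAt_const θ a)
      (hasDerivAt_id θ) (hasDerivAt_const θ v)).deriv
  have hηv : ηv = solitonTangent μ a θ v 0 0 0 1 := funext fun x ↦
    (hasDerivAt_soliton_comp x hμ.ne' (hasDerivAt_const v μ) (hasDerivAt_const v a)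
      (hasDerivAt_const v θ) (hasDerivAt_id v)).deriv
  simp only [ω, hημ, hηa, hηθ, hηv, im_integral_solitonTangent_mul_conj hμ]
  norm_num
end

section
/- Let ψ : ℝ → ℝ be smooth with all derivatives bounded, and let u : ℝ → ℂ be a Schwartz function. Then the Poisson bracket of the NLS energy with the localized momentum P_ψ(u) = (1/2) Im ∫_ℝ ψ conj(u) u' dx satisfies the identity Re ∫_ℝ ( -i(ψ u' + (1/2)ψ' u) ) · conj( i( (1/2)u'' + |u|²u ) ) dx = ∫_ℝ ψ' ( (1/2)|u'|² - (1/4)|u|⁴ ) dx - (1/8) ∫_ℝ ψ''' |u|² dx. (The left side is ⟨P_ψ'(u), JH'(u)⟩, where P_ψ'(u) = -i(ψu' + (1/2)ψ'u) and JH'(u) = i((1/2)u'' + |u|²u) is the NLS vector field.) -/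
open Real MeasureTheory

/-!
The integrand of `⟨P_ψ'(u), JH'(u)⟩` differs from
`ψ' (½‖u'‖² - ¼‖u‖⁴) - ⅛ ψ''' ‖u‖²` by the exact derivative of
`⅛ ψ'' ‖u‖² - ¼ (ψ (‖u'‖² + ‖u‖⁴) + ψ' ⟪u, u'⟫)`, which integrates to zero.
Every term is integrable by Hölder's inequality, since `ψ` and its derivatives are bounded,
`u, u', u'' ∈ L²`, and `u ∈ L^∞` because `‖u‖²` has the integrable derivative `2 ⟪u, u'⟫`.
-/

open scoped ENNReal

section SobolevEmbedding

variable {E : Type*} [NormedAddCommGroup E]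

theorem norm_le_add_integral_norm_deriv [NormedSpace ℝ E] [CompleteSpace E] {f : ℝ → E}
    (hf : Differentiable ℝ f) (hf' : Integrable (deriv f)) (x : ℝ) :
    ‖f x‖ ≤ ‖f 0‖ + ∫ t, ‖deriv f t‖ := by
  have ftc : f x = f 0 + ∫ t in (0 : ℝ)..x, deriv f t := by
    rw [intervalIntegral.integral_eq_sub_of_hasDerivAt (fun t _ => (hf t).hasDerivAt)
      hf'.intervalIntegrable, add_sub_cancel]
  calc ‖f x‖ ≤ ‖f 0‖ + ‖∫ t in (0 : ℝ)..x, deriv f t‖ := ftc ▸ norm_add_le _ _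
    _ ≤ ‖f 0‖ + ∫ t in Set.uIoc 0 x, ‖deriv f t‖ := by
        gcongr
        exact intervalIntegral.norm_integral_le_integral_norm_uIoc
    _ ≤ ‖f 0‖ + ∫ t, ‖deriv f t‖ := by
        grw [setIntegral_le_integral hf'.norm (.of_forall fun t => norm_nonneg (deriv f t))]

theorem integrable_inner_of_memLp_two [InnerProductSpace ℝ E] {α : Type*} [MeasurableSpace α]
    {μ : Measure α} {f g : α → E} (hf : MemLp f 2 μ) (hg : MemLp g 2 μ) :
    Integrable (fun x => inner ℝ (f x) (g x)) μ :=
  (hf.norm.integrable_mul hg.norm).mono' (hf.1.inner hg.1)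
    (.of_forall fun _ => norm_inner_le_norm _ _)

theorem memLp_top_of_memLp_two_deriv [InnerProductSpace ℝ E] {f : ℝ → E}
    (hf : Differentiable ℝ f) (hf₂ : MemLp f 2) (hf₂' : MemLp (deriv f) 2) : MemLp f ∞ := by
  have deriv_sq : deriv (fun x => ‖f x‖ ^ 2) = fun x => 2 * inner ℝ (f x) (deriv f x) :=
    funext fun x => (hf x).hasDerivAt.norm_sq.deriv
  have integrable_deriv_sq : Integrable (deriv fun x => ‖f x‖ ^ 2) :=
    deriv_sq ▸ (integrable_inner_of_memLp_two hf₂ hf₂').const_mul 2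
  have sq_le := norm_le_add_integral_norm_deriv (hf.norm_sq ℝ) integrable_deriv_sq
  exact memLp_top_of_bound hf₂.1 _
    (ae_of_all _ fun x => Real.le_sqrt_of_sq_le ((le_norm_self _).trans (sq_le x)))

end SobolevEmbedding

theorem integrable_norm_pow_four {α E : Type*} [MeasurableSpace α] {μ : Measure α}
    [NormedAddCommGroup E] {f : α → E} (hf : MemLp f 2 μ) (hf_top : MemLp f ∞ μ) :
    Integrable (fun x => ‖f x‖ ^ 4) μ := by
  have norm_sq_top : MemLp (fun x => ‖f x‖ ^ 2) ∞ μ := by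
    simpa only [sq] using hf_top.norm.mul' hf_top.norm
  refine (hf.norm.integrable_sq.mul_of_top_right norm_sq_top).congr (.of_forall fun x => ?_)
  simp only [Pi.mul_apply]
  ring

theorem hasDerivAt_iteratedDeriv {𝕜 F : Type*} [NontriviallyNormedField 𝕜]
    [NormedAddCommGroup F] [NormedSpace 𝕜 F] {f : 𝕜 → F} {N : WithTop ℕ∞} {n : ℕ}
    (hf : ContDiff 𝕜 N f) (hn : n < N) (x : 𝕜) :
    HasDerivAt (iteratedDeriv n f) (iteratedDeriv (n + 1) f x) x := by
  rw [iteratedDeriv_succ]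
  exact (hf.differentiable_iteratedDeriv n hn x).hasDerivAt

theorem memLp_top_iteratedDeriv {F : Type*} [NormedAddCommGroup F] [NormedSpace ℝ F]
    {f : ℝ → F} {N : WithTop ℕ∞} {n : ℕ} (hf : ContDiff ℝ N f) (hn : n ≤ N)
    (hfb : ∃ C : ℝ, ∀ x : ℝ, ‖iteratedDeriv n f x‖ ≤ C) : MemLp (iteratedDeriv n f) ∞ := by
  obtain ⟨C, hC⟩ := hfb
  exact memLp_top_of_bound (hf.continuous_iteratedDeriv n hn).aestronglyMeasurable C (.of_forall hC)

/-- The `L²` gradient `P_ψ'(u) = -i (ψ u' + ½ ψ' u)` of the localized momentum. -/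
noncomputable def localizedMomentumGradient (ψ : ℝ → ℝ) (u : ℝ → ℂ) (x : ℝ) : ℂ :=
  -Complex.I * ((ψ x : ℂ) * deriv u x + (1 / 2) * ((deriv ψ x : ℝ) : ℂ) * u x)

/-- The Hamiltonian vector field `JH'(u) = i (½ u'' + |u|² u)` of the cubic NLS. -/
noncomputable def nlsVectorField (u : ℝ → ℂ) (x : ℝ) : ℂ :=
  Complex.I * ((1 / 2) * deriv (deriv u) x + (‖u x‖ : ℂ) ^ 2 * u x)

/-- The density of the Poisson bracket `⟨P_ψ'(u), JH'(u)⟩`, for the real inner product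
`inner ℝ z w = Re (z * conj w)` on `ℂ`. -/
noncomputable def poissonBracketDensity (ψ : ℝ → ℝ) (u : ℝ → ℂ) (x : ℝ) : ℝ :=
  inner ℝ (localizedMomentumGradient ψ u x) (nlsVectorField u x)

/-- The flux in the local conservation law for the momentum: its derivative is the Poisson bracket
density minus the production `ψ' (½‖u'‖² - ¼‖u‖⁴) - ⅛ ψ''' ‖u‖²`. -/
noncomputable def momentumFlux (ψ : ℝ → ℝ) (u : ℝ → ℂ) (x : ℝ) : ℝ :=
  1 / 8 * (iteratedDeriv 2 ψ x * ‖u x‖ ^ 2)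
    - 1 / 4 * (ψ x * (‖deriv u x‖ ^ 2 + ‖u x‖ ^ 4) + deriv ψ x * inner ℝ (u x) (deriv u x))

theorem inner_I_mul_I_mul (z w : ℂ) :
    inner ℝ (Complex.I * z) (Complex.I * w) = inner ℝ z w := by
  simp only [Complex.inner, map_mul, Complex.conj_I]
  rw [mul_mul_mul_comm, mul_neg, Complex.I_mul_I, neg_neg, one_mul]

section PoissonBracket

variable {ψ : ℝ → ℝ} {u : ℝ → ℂ}

theorem poissonBracketDensity_eq (x : ℝ) :
    poissonBracketDensity ψ u x =
      -(ψ x * (1 / 2 * inner ℝ (deriv u x) (deriv (deriv u) x)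
          + ‖u x‖ ^ 2 * inner ℝ (u x) (deriv u x))
        + 1 / 2 * deriv ψ x * (1 / 2 * inner ℝ (u x) (deriv (deriv u) x) + ‖u x‖ ^ 4)) := by
  have gradient : localizedMomentumGradient ψ u x
      = -(Complex.I * (ψ x • deriv u x + (1 / 2 * deriv ψ x) • u x)) := by
    simp only [localizedMomentumGradient, Complex.real_smul]
    push_cast
    ring
  have field : nlsVectorField u x
      = Complex.I * ((1 / 2 : ℝ) • deriv (deriv u) x + ‖u x‖ ^ 2 • u x) := by
    simp only [nlsVectorField, Complex.real_smul]
    push_cast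
    ring
  rw [poissonBracketDensity, gradient, field, inner_neg_left, inner_I_mul_I_mul]
  simp only [inner_add_left, inner_add_right, real_inner_smul_left, real_inner_smul_right,
    real_inner_self_eq_norm_sq, real_inner_comm (u x) (deriv u x)]
  ring

theorem hasDerivAt_momentumFlux (hψ : ContDiff ℝ 3 ψ) (hu : Differentiable ℝ u)
    (hu' : Differentiable ℝ (deriv u)) (x : ℝ) :
    HasDerivAt (momentumFlux ψ u)
      (poissonBracketDensity ψ u x
        - deriv ψ x * ((1 / 2) * ‖deriv u x‖ ^ 2 - (1 / 4) * ‖u x‖ ^ 4)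
        + 1 / 8 * (iteratedDeriv 3 ψ x * ‖u x‖ ^ 2)) x := by
  have hψ₀ : HasDerivAt ψ (deriv ψ x) x := (hψ.differentiable (by norm_num) x).hasDerivAt
  have hψ₁ : HasDerivAt (deriv ψ) (iteratedDeriv 2 ψ x) x := by
    simpa only [iteratedDeriv_one] using hasDerivAt_iteratedDeriv hψ (n := 1) (by norm_num) x
  have hψ₂ : HasDerivAt (iteratedDeriv 2 ψ) (iteratedDeriv 3 ψ x) x :=
    hasDerivAt_iteratedDeriv hψ (by norm_num) x
  have mass := (hu x).hasDerivAt.norm_sq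
  have kinetic := (hu' x).hasDerivAt.norm_sq
  have quartic : HasDerivAt (fun y => ‖u y‖ ^ 4)
      (4 * ‖u x‖ ^ 2 * inner ℝ (u x) (deriv u x)) x := by
    simpa only [← pow_add, Nat.reduceAdd] using (mass.fun_mul mass).congr_deriv (by ring)
  have cross := (hu x).hasDerivAt.inner ℝ (hu' x).hasDerivAt
  refine (((hψ₂.mul mass).const_mul (1 / 8)).sub
    (((hψ₀.mul (kinetic.add quartic)).add (hψ₁.mul cross)).const_mul (1 / 4))).congr_deriv ?_
  rw [poissonBracketDensity_eq, real_inner_self_eq_norm_sq, Pi.add_apply]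
  ring

theorem memLp_localizedMomentumGradient (hψ₀ : MemLp ψ ∞) (hψ₁ : MemLp (deriv ψ) ∞)
    (hu₀ : MemLp u 2) (hu₁ : MemLp (deriv u) 2) : MemLp (localizedMomentumGradient ψ u) 2 := by
  have transport : MemLp (fun x => (ψ x : ℂ) * deriv u x) 2 := hu₁.mul' hψ₀.ofReal
  have symmetrizer : MemLp (fun x => (1 / 2) * ((deriv ψ x : ℝ) : ℂ) * u x) 2 :=
    hu₀.mul' (hψ₁.ofReal.const_mul (1 / 2))
  exact (transport.add symmetrizer).const_mul (-Complex.I)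

theorem memLp_nlsVectorField (hu₀ : MemLp u 2) (hu_top : MemLp u ∞)
    (hu₂ : MemLp (deriv (deriv u)) 2) : MemLp (nlsVectorField u) 2 := by
  have modulus : MemLp (fun x => (‖u x‖ : ℂ)) ∞ := hu_top.norm.ofReal
  have cubic : MemLp (fun x => (‖u x‖ : ℂ) ^ 2 * u x) 2 := by
    simpa only [sq] using hu₀.mul' (modulus.mul' modulus (r := ∞))
  exact ((hu₂.const_mul (1 / 2)).add cubic).const_mul Complex.I

theorem integrable_momentumFlux (hψ₀ : MemLp ψ ∞) (hψ₁ : MemLp (deriv ψ) ∞)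
    (hψ₂ : MemLp (iteratedDeriv 2 ψ) ∞) (hu₀ : MemLp u 2) (hu_top : MemLp u ∞)
    (hu₁ : MemLp (deriv u) 2) : Integrable (momentumFlux ψ u) := by
  have mass := hu₀.norm.integrable_sq.mul_of_top_right hψ₂
  have energy :=
    (hu₁.norm.integrable_sq.add (integrable_norm_pow_four hu₀ hu_top)).mul_of_top_right hψ₀
  have cross := (integrable_inner_of_memLp_two hu₀ hu₁).mul_of_top_right hψ₁
  exact (mass.const_mul (1 / 8)).sub ((energy.add cross).const_mul (1 / 4))

theorem integrable_localizedMomentumProduction (hψ₁ : MemLp (deriv ψ) ∞) (hu₀ : MemLp u 2)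
    (hu_top : MemLp u ∞) (hu₁ : MemLp (deriv u) 2) :
    Integrable (fun x => deriv ψ x * ((1 / 2) * ‖deriv u x‖ ^ 2 - (1 / 4) * ‖u x‖ ^ 4)) :=
  ((hu₁.norm.integrable_sq.const_mul (1 / 2)).sub
    ((integrable_norm_pow_four hu₀ hu_top).const_mul (1 / 4))).mul_of_top_right hψ₁

theorem re_integral_eq_integral_poissonBracketDensity
    (hgradient : MemLp (localizedMomentumGradient ψ u) 2) (hfield : MemLp (nlsVectorField u) 2) :
    (∫ x, localizedMomentumGradient ψ u x * (starRingEnd ℂ) (nlsVectorField u x)).re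
      = ∫ x, poissonBracketDensity ψ u x := by
  refine (integral_re (hgradient.integrable_mul hfield.star)).symm.trans ?_
  refine integral_congr_ae (.of_forall fun x => ?_)
  exact (Complex.inner _ _).symm.trans (real_inner_comm _ _)

theorem integral_poissonBracketDensity (hψ : ContDiff ℝ 3 ψ)
    (hψb : ∀ n ≤ 3, MemLp (iteratedDeriv n ψ) ∞)
    (hu : Differentiable ℝ u) (hu' : Differentiable ℝ (deriv u)) (hu₀ : MemLp u 2)
    (hu₁ : MemLp (deriv u) 2) (hbracket : Integrable (poissonBracketDensity ψ u)) :
    ∫ x, poissonBracketDensity ψ u x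
      = (∫ x, deriv ψ x * ((1 / 2) * ‖deriv u x‖ ^ 2 - (1 / 4) * ‖u x‖ ^ 4))
        - (1 / 8) * ∫ x, iteratedDeriv 3 ψ x * ‖u x‖ ^ 2 := by
  have hψ₀ : MemLp ψ ∞ := by simpa only [iteratedDeriv_zero] using hψb 0 (by norm_num)
  have hψ₁ : MemLp (deriv ψ) ∞ := by simpa only [iteratedDeriv_one] using hψb 1 (by norm_num)
  have hu_top := memLp_top_of_memLp_two_deriv hu hu₀ hu₁
  have production := integrable_localizedMomentumProduction hψ₁ hu₀ hu_top hu₁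
  have dispersion : Integrable (fun x => iteratedDeriv 3 ψ x * ‖u x‖ ^ 2) :=
    hu₀.norm.integrable_sq.mul_of_top_right (hψb 3 le_rfl)
  have remainder : Integrable (fun x => poissonBracketDensity ψ u x
      - deriv ψ x * ((1 / 2) * ‖deriv u x‖ ^ 2 - (1 / 4) * ‖u x‖ ^ 4)) :=
    hbracket.sub production
  have flux_integral := integral_eq_zero_of_hasDerivAt_of_integrable
    (hasDerivAt_momentumFlux hψ hu hu') (remainder.add (dispersion.const_mul (1 / 8)))
    (integrable_momentumFlux hψ₀ hψ₁ (hψb 2 (by norm_num)) hu₀ hu_top hu₁)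
  rw [integral_add remainder (dispersion.const_mul _), integral_sub hbracket production,
    integral_const_mul] at flux_integral
  linarith

theorem poisson_bracket_localized_momentum_general (hψ : ContDiff ℝ 3 ψ)
    (hψb : ∀ n ≤ 3, ∃ C : ℝ, ∀ x : ℝ, |iteratedDeriv n ψ x| ≤ C)
    (hu : Differentiable ℝ u) (hu' : Differentiable ℝ (deriv u))
    (hu₀ : MemLp u 2) (hu₁ : MemLp (deriv u) 2) (hu₂ : MemLp (deriv (deriv u)) 2) :
    (∫ x : ℝ, (-Complex.I * ((ψ x : ℂ) * deriv u x + (1 / 2) * ((deriv ψ x : ℝ) : ℂ) * u x)) *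
        (starRingEnd ℂ) (Complex.I * ((1 / 2) * deriv (deriv u) x + (‖u x‖ : ℂ) ^ 2 * u x))).re
      = (∫ x : ℝ, deriv ψ x * ((1 / 2) * ‖deriv u x‖ ^ 2 - (1 / 4) * ‖u x‖ ^ 4))
        - (1 / 8) * ∫ x : ℝ, iteratedDeriv 3 ψ x * ‖u x‖ ^ 2 := by
  have weight (n : ℕ) (hn : n ≤ 3) : MemLp (iteratedDeriv n ψ) ∞ :=
    memLp_top_iteratedDeriv hψ (by exact_mod_cast hn) (hψb n hn)
  have hψ₀ : MemLp ψ ∞ := by simpa only [iteratedDeriv_zero] using weight 0 (by norm_num)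
  have hψ₁ : MemLp (deriv ψ) ∞ := by simpa only [iteratedDeriv_one] using weight 1 (by norm_num)
  have hu_top := memLp_top_of_memLp_two_deriv hu hu₀ hu₁
  have gradient := memLp_localizedMomentumGradient hψ₀ hψ₁ hu₀ hu₁
  have field := memLp_nlsVectorField hu₀ hu_top hu₂
  exact (re_integral_eq_integral_poissonBracketDensity gradient field).trans
    (integral_poissonBracketDensity hψ weight hu hu' hu₀ hu₁
      (integrable_inner_of_memLp_two gradient field))

end PoissonBracket

/-- Poisson bracket of the NLS Hamiltonian with the localized momentum
`P_ψ(u) = (1/2) Im ∫ ψ conj(u) u'`: for a smooth weight `ψ` with bounded derivatives and `u`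
Schwartz, `⟨P_ψ'(u), JH'(u)⟩ = ∫ψ'((1/2)|u'|² - (1/4)|u|⁴) - (1/8)∫ψ'''|u|²`. -/
theorem poisson_bracket_localized_momentum (ψ : ℝ → ℝ)
    (hψ : ContDiff ℝ (⊤ : ℕ∞) ψ)
    (hψb : ∀ n : ℕ, ∃ C : ℝ, ∀ x : ℝ, |iteratedDeriv n ψ x| ≤ C)
    (u : SchwartzMap ℝ ℂ) :
    (∫ x : ℝ, (-Complex.I * ((ψ x : ℂ) * deriv (⇑u) x + (1 / 2) * ((deriv ψ x : ℝ) : ℂ) * u x)) *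
        (starRingEnd ℂ) (Complex.I * ((1 / 2) * deriv (deriv (⇑u)) x
          + (‖u x‖ : ℂ) ^ 2 * u x))).re
      = (∫ x : ℝ, deriv ψ x * ((1 / 2) * ‖deriv (⇑u) x‖ ^ 2 - (1 / 4) * ‖u x‖ ^ 4))
        - (1 / 8) * ∫ x : ℝ, iteratedDeriv 3 ψ x * ‖u x‖ ^ 2 := by
  let u' := SchwartzMap.derivCLM ℝ ℂ u
  have hu' : deriv u = u' := rfl
  have hu'' : deriv u' = SchwartzMap.derivCLM ℝ ℂ u' := rfl
  exact poisson_bracket_localized_momentum_general (contDiff_infty.1 hψ 3) (fun n _ => hψb n)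
    u.differentiable (hu' ▸ u'.differentiable) (u.memLp 2) (hu' ▸ u'.memLp 2)
    (hu' ▸ hu'' ▸ (SchwartzMap.derivCLM ℝ ℂ u').memLp 2)
end
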